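/- arXiv:1204.4383 — 9 statements merged into one kernel-verified Lean document; each statement's English description precedes it below -/
import Mathlib

section
/- Let M be a smooth manifold, let F, H, V be smooth vector fields on M, and let λ, I, J, K be smooth real-valued functions on M satisfying the commutation relations [V,F] = H + (Vλ)·V, [H,V] = F + I·H + (J−λ)·V, and [F,H] = (K − Hλ − λJ + λ²)·V − λ·F − (λI)·H. Then for every smooth function u : M → ℝ the Pestov identity holds pointwise: 2·Hu·V(Fu) = (Fu)² + (Hu)² − (K − Hλ − λJ + λ²)·(Vu)² + F(Hu·Vu) − H(Vu·Fu) + V(Hu·Fu) + Fu·(I·Hu + J·Vu) + Hu·Vu·(λI + Vλ). -/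
open scoped Manifold

/-!
Expand `F (H u * V u) - H (V u * F u) + V (H u * F u)` by the Leibniz rule. The second-order terms
with coefficients `V u` and `F u` form the brackets `⁅F, H⁆ u` and `-⁅H, V⁆ u`, while the sum
`F (V u) + V (F u)` multiplying `H u` is `2 * V (F u) - ⁅V, F⁆ u`. The structure equations then
turn the bracket terms into a quadratic form in `F u`, `H u` and `V u`.
-/

section Derivations

variable {R A : Type*} [CommRing R] [CommRing A] [Algebra R A] (F H V : Derivation R A A)

theorem pestov_identity_of_brackets (u : A) :
    2 * H u * V (F u)
      = F (H u * V u) - H (V u * F u) + V (H u * F u)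
        + H u * ⁅V, F⁆ u + F u * ⁅H, V⁆ u - V u * ⁅F, H⁆ u := by
  simp only [Derivation.leibniz, Derivation.commutator_apply, smul_eq_mul]
  ring

theorem stmt_0_general (a i j κ lam c : A)
    (hVF : ⁅V, F⁆ = H + a • V)
    (hHV : ⁅H, V⁆ = F + i • H + (j - lam) • V)
    (hFH : ⁅F, H⁆ = κ • V - lam • F - c • H) (u : A) :
    2 * H u * V (F u)
      = (F u) ^ 2 + (H u) ^ 2 - κ * (V u) ^ 2
        + F (H u * V u) - H (V u * F u) + V (H u * F u)
        + F u * (i * H u + j * V u) + H u * V u * (c + a) := by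
  rw [pestov_identity_of_brackets, hVF, hHV, hFH]
  simp only [Derivation.add_apply, Derivation.sub_apply, Derivation.smul_apply, smul_eq_mul]
  ring

end Derivations

/-- **Pestov identity** for a generalized thermostat, stated algebraically.
Smooth vector fields on the smooth manifold `M` are modelled as derivations of the
algebra `C^⊤⟮Im, M; ℝ⟯` of smooth real-valued functions; for a vector field `X` and a
smooth function `f`, `X f` is the derivative of `f` along `X`, `⁅X, Y⁆` is the Lie
bracket, and `f • X` is the pointwise scalar multiple. -/
theorem stmt_0
    {E : Type*} [NormedAddCommGroup E] [NormedSpace ℝ E]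
    {Hm : Type*} [TopologicalSpace Hm] (Im : ModelWithCorners ℝ E Hm)
    {M : Type*} [TopologicalSpace M] [ChartedSpace Hm M]
    (F H V : Derivation ℝ C^(⊤ : ℕ∞)⟮Im, M; ℝ⟯ C^(⊤ : ℕ∞)⟮Im, M; ℝ⟯)
    (lam i j k : C^(⊤ : ℕ∞)⟮Im, M; ℝ⟯)
    (h1 : ⁅V, F⁆ = H + (V lam) • V)
    (h2 : ⁅H, V⁆ = F + i • H + (j - lam) • V)
    (h3 : ⁅F, H⁆ = (k - H lam - lam * j + lam ^ 2) • V - lam • F - (lam * i) • H) :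
    ∀ u : C^(⊤ : ℕ∞)⟮Im, M; ℝ⟯,
      2 * H u * V (F u)
        = (F u) ^ 2 + (H u) ^ 2 - (k - H lam - lam * j + lam ^ 2) * (V u) ^ 2
          + F (H u * V u) - H (V u * F u) + V (H u * F u)
          + F u * (i * H u + j * V u) + H u * V u * (lam * i + V lam) :=
  stmt_0_general F H V (V lam) i j (k - H lam - lam * j + lam ^ 2) lam (lam * i) h1 h2 h3
end

section
/- Let M be a smooth manifold, let F, H, V be smooth vector fields on M, and let λ be a smooth real-valued function on M satisfying the single commutation relation [V,F] = H + (Vλ)·V. Then for every smooth function u : M → ℝ the following identity holds pointwise: (F(Vu))² = (V(Fu))² + (Hu)² − ((Vλ)·Vu)² − 2·V(Fu)·Hu − F((Vλ)·(Vu)²) + (Vu)²·F(Vλ). -/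
open scoped Manifold

section

variable {R A : Type*}

theorem derivation_mul_sq [CommSemiring R] [CommSemiring A] [Algebra R A]
    {M : Type*} [AddCommMonoid M] [Module A M] [Module R M]
    (D : Derivation R A M) (a b : A) :
    D (a * b ^ 2) = b ^ 2 • D a + (2 * a * b) • D b := by
  rw [D.leibniz, D.leibniz_pow]
  module

variable [CommRing R] [CommRing A] [Algebra R A] {F H V : Derivation R A A} {g : A}

theorem apply_apply_add_mul_of_lie_eq_add_smul (hVF : ⁅V, F⁆ = H + g • V) (u : A) :
    F (V u) + g * V u = V (F u) - H u := by
  have bracket_apply : V (F u) - F (V u) = H u + g * V u := by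
    simpa only [Derivation.commutator_apply, Derivation.add_apply, Derivation.smul_apply,
      smul_eq_mul] using DFunLike.congr_fun hVF u
  linear_combination -bracket_apply

-- Square `F (V u) + g * V u = V (F u) - H u`; the Leibniz rule for `F (g * V u ^ 2)` turns the
-- cross term `2 * g * V u * F (V u)` into the last two terms of the identity.
theorem stmt_2_general (hVF : ⁅V, F⁆ = H + g • V) (u : A) :
    (F (V u)) ^ 2
      = (V (F u)) ^ 2 + (H u) ^ 2 - (g * V u) ^ 2 - 2 * V (F u) * H u
        - F (g * (V u) ^ 2) + (V u) ^ 2 * F g := by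
  have squared : (F (V u) + g * V u) ^ 2 = (V (F u) - H u) ^ 2 := by
    rw [apply_apply_add_mul_of_lie_eq_add_smul hVF]
  have leibniz : F (g * (V u) ^ 2) = (V u) ^ 2 * F g + 2 * g * V u * F (V u) :=
    derivation_mul_sq F g (V u)
  linear_combination squared + leibniz

end

/-- The pointwise identity for `(F(Vu))²` following from the single commutation relation
`[V,F] = H + (Vλ)·V`. Smooth vector fields on the smooth manifold `M` are modelled as
derivations of the algebra `C^⊤⟮Im, M; ℝ⟯` of smooth real-valued functions; for a vector
field `Y` and a smooth function `f`, `Y f` is the derivative of `f` along `Y`, `⁅Y, Z⁆`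
is the Lie bracket, and `f • Y` is the pointwise scalar multiple. -/
theorem stmt_2
    {E : Type*} [NormedAddCommGroup E] [NormedSpace ℝ E]
    {Hm : Type*} [TopologicalSpace Hm] (Im : ModelWithCorners ℝ E Hm)
    {M : Type*} [TopologicalSpace M] [ChartedSpace Hm M]
    (F H V : Derivation ℝ C^(⊤ : ℕ∞)⟮Im, M; ℝ⟯ C^(⊤ : ℕ∞)⟮Im, M; ℝ⟯)
    (lam : C^(⊤ : ℕ∞)⟮Im, M; ℝ⟯)
    (h1 : ⁅V, F⁆ = H + (V lam) • V) :
    ∀ u : C^(⊤ : ℕ∞)⟮Im, M; ℝ⟯,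
      (F (V u)) ^ 2
        = (V (F u)) ^ 2 + (H u) ^ 2 - ((V lam) * V u) ^ 2 - 2 * V (F u) * H u
          - F ((V lam) * (V u) ^ 2) + (V u) ^ 2 * F (V lam) :=
  stmt_2_general h1
end

section
/- Let A > 0 and D ∈ ℝ, and define w : (D/(A√5), ∞) → ℝ by w(t) = A/(1 − e^{−A√5·t + D}) + (A(√5−1)/2)·(1 + e^{−A√5·t + D})/(1 − e^{−A√5·t + D}). Then w is differentiable and satisfies w'(t) − A·w(t) + w(t)² − A² = 0 for all t > D/(A√5). -/
/-!
The polynomial `w ^ 2 - A * w - A ^ 2` has the roots `A * φ` and `A * ψ`, whose difference is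
`A * √5`. For any roots `p` and `q`, the Möbius substitution `E = (w - p) / (w - q)` turns
`w' = -((w - p) * (w - q))` into the linear equation `E' = -((p - q) * E)`. Inverting it gives
`w = (p - q * E) / (1 - E)`, and the given function is this one for `E t = exp (-(A * √5 * t) + D)`.
-/

open Real goldenRatio

theorem hasDerivAt_riccati_of_hasDerivAt_linear {𝕜 : Type*} [NontriviallyNormedField 𝕜]
    {p q t : 𝕜} {E w : 𝕜 → 𝕜} (hw : ∀ s, w s = (p - q * E s) / (1 - E s))
    (hE : HasDerivAt E (-((p - q) * E t)) t) (hEt : E t ≠ 1) :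
    HasDerivAt w (-((w t - p) * (w t - q))) t := by
  have hden : 1 - E t ≠ 0 := sub_ne_zero.mpr hEt.symm
  have hsub_p : w t - p = (p - q) * E t / (1 - E t) := by
    rw [hw t]
    field_simp
    ring
  have hsub_q : w t - q = (p - q) / (1 - E t) := by
    rw [hw t]
    field_simp
    ring
  have hquot := ((hE.const_mul q).const_sub p).fun_div (hE.const_sub 1) hden
  rw [hsub_p, hsub_q, funext hw]
  refine hquot.congr_deriv ?_
  field_simp
  ring

theorem hasDerivAt_exp_neg_mul_add (c D t : ℝ) :
    HasDerivAt (fun s ↦ exp (-(c * s) + D)) (-(c * exp (-(c * t) + D))) t := by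
  have hexponent : HasDerivAt (fun s ↦ -(c * s) + D) (-c) t :=
    (hasDerivAt_const_mul c).fun_neg.add_const D
  exact hexponent.exp.congr_deriv (by ring)

theorem neg_sub_mul_goldenRatio_mul_sub_mul_goldenConj (A x : ℝ) :
    -((x - A * φ) * (x - A * ψ)) = A * x - x ^ 2 + A ^ 2 := by
  linear_combination A * x * goldenRatio_add_goldenConj - A ^ 2 * goldenRatio_mul_goldenConj

theorem div_add_div_eq_goldenRatio_sub_goldenConj_div (A E : ℝ) :
    A / (1 - E) + (A * (√5 - 1) / 2) * (1 + E) / (1 - E) =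
      (A * φ - A * ψ * E) / (1 - E) := by
  rw [← add_div, goldenRatio, goldenConj]
  ring

theorem stmt_6_general (A D : ℝ) (w : ℝ → ℝ)
    (hw : ∀ t : ℝ, w t =
      A / (1 - exp (-(A * √5 * t) + D))
        + (A * (√5 - 1) / 2) * (1 + exp (-(A * √5 * t) + D)) / (1 - exp (-(A * √5 * t) + D)))
    (t : ℝ) (ht : A * √5 * t ≠ D) :
    HasDerivAt w (A * w t - (w t) ^ 2 + A ^ 2) t := by
  have hroots : A * φ - A * ψ = A * √5 := by
    rw [← mul_sub, goldenRatio_sub_goldenConj]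
  have hE : HasDerivAt (fun s ↦ exp (-(A * √5 * s) + D))
      (-((A * φ - A * ψ) * exp (-(A * √5 * t) + D))) t := by
    rw [hroots]
    exact hasDerivAt_exp_neg_mul_add (A * √5) D t
  have hEt : exp (-(A * √5 * t) + D) ≠ 1 := by
    rwa [Ne, exp_eq_one_iff, neg_add_eq_zero]
  rw [← neg_sub_mul_goldenRatio_mul_sub_mul_goldenConj]
  exact hasDerivAt_riccati_of_hasDerivAt_linear
    (fun s ↦ (hw s).trans (div_add_div_eq_goldenRatio_sub_goldenConj_div A _)) hE hEt

/-- The explicit function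
`w(t) = A/(1 − e^{−A√5·t + D}) + (A(√5−1)/2)·(1 + e^{−A√5·t + D})/(1 − e^{−A√5·t + D})`
solves the autonomous Riccati equation `w' − A·w + w² − A² = 0` on `(D/(A√5), ∞)`. -/
theorem stmt_6 (A D : ℝ) (hA : 0 < A) (w : ℝ → ℝ)
    (hw : ∀ t : ℝ, w t =
      A / (1 - Real.exp (-(A * Real.sqrt 5 * t) + D))
        + (A * (Real.sqrt 5 - 1) / 2)
          * (1 + Real.exp (-(A * Real.sqrt 5 * t) + D))
          / (1 - Real.exp (-(A * Real.sqrt 5 * t) + D))) :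
    ∀ t > D / (A * Real.sqrt 5),
      HasDerivAt w (A * w t - (w t) ^ 2 + A ^ 2) t := by
  intro t ht
  exact stmt_6_general A D w hw t ((div_lt_iff₀' (by positivity)).mp ht).ne'
end

section
/- Let A > 0 and E ∈ ℝ, and define w : (−E/(A√5), ∞) → ℝ by w(t) = −A·e^{A√5·t + E}/(e^{A√5·t + E} − 1) + (A(1+√5)/2)·(e^{A√5·t + E} + 1)/(e^{A√5·t + E} − 1). Then w is differentiable and satisfies w'(t) + A·w(t) + w(t)² − A² = 0 for all t > −E/(A√5). -/
/-!
The constant solutions of the Riccati equation are the roots `-Aφ` and `-Aψ` of `u² + Au - A²`,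
where `φ` and `ψ` are the golden ratio and its conjugate. The Möbius map `y ↦ (ay - b) / (y - 1)`
carries the linear equation `y' = (a - b) y` to the Riccati equation `w' = -(w - a) (w - b)`, and
the given `w` is the image of `y(t) = exp (A√5 t + E)` for `a = -Aψ`, `b = -Aφ`, `a - b = A√5`.
-/

open scoped goldenRatio

/-- The Möbius map sending `∞`, `0`, `1` to `a`, `b`, `∞`, which turns solutions of
`y' = (a - b) y` into solutions of `w' = -(w - a) (w - b)`. At its pole `y = 1` it takes the
junk value `0`. -/
def riccatiMobius {K : Type*} [Field K] (a b y : K) : K :=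
  (a * y - b) / (y - 1)

section Field

variable {K : Type*} [Field K] {y : K}

theorem riccatiMobius_sub_left (a b : K) (hy : y ≠ 1) :
    riccatiMobius a b y - a = (a - b) / (y - 1) := by
  have hden : y - 1 ≠ 0 := sub_ne_zero.mpr hy
  unfold riccatiMobius
  field_simp
  ring

theorem riccatiMobius_sub_right (a b : K) (hy : y ≠ 1) :
    riccatiMobius a b y - b = (a - b) * y / (y - 1) := by
  have hden : y - 1 ≠ 0 := sub_ne_zero.mpr hy
  unfold riccatiMobius
  field_simp
  ring

end Field

theorem hasDerivAt_riccatiMobius {𝕜 : Type*} [NontriviallyNormedField 𝕜] (a b : 𝕜) {y : 𝕜}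
    (hy : y ≠ 1) :
    HasDerivAt (riccatiMobius a b) (-((a - b) / (y - 1) ^ 2)) y := by
  have hnum : HasDerivAt (fun z ↦ a * z - b) a y := (hasDerivAt_const_mul a).sub_const b
  have hden : HasDerivAt (fun z ↦ z - 1) 1 y := (hasDerivAt_id' y).sub_const 1
  refine (hnum.div hden (sub_ne_zero.mpr hy)).congr_deriv ?_
  ring

theorem hasDerivAt_riccatiMobius_comp {𝕜 𝕜' : Type*} [NontriviallyNormedField 𝕜]
    [NontriviallyNormedField 𝕜'] [NormedAlgebra 𝕜 𝕜'] {a b : 𝕜'} {y : 𝕜 → 𝕜'} {t : 𝕜}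
    (hy : HasDerivAt y ((a - b) * y t) t) (hy_ne : y t ≠ 1) :
    HasDerivAt (fun s ↦ riccatiMobius a b (y s))
      (-((riccatiMobius a b (y t) - a) * (riccatiMobius a b (y t) - b))) t := by
  refine ((hasDerivAt_riccatiMobius a b hy_ne).comp t hy).congr_deriv ?_
  rw [riccatiMobius_sub_left a b hy_ne, riccatiMobius_sub_right a b hy_ne, div_mul_div_comm, ← sq]
  ring

theorem hasDerivAt_riccatiMobius_exp {a b c t : ℝ} (ht : (a - b) * t + c ≠ 0) :
    HasDerivAt (fun s ↦ riccatiMobius a b (Real.exp ((a - b) * s + c)))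
      (-((riccatiMobius a b (Real.exp ((a - b) * t + c)) - a) *
        (riccatiMobius a b (Real.exp ((a - b) * t + c)) - b))) t := by
  have hexp : HasDerivAt (fun s : ℝ ↦ Real.exp ((a - b) * s + c))
      ((a - b) * Real.exp ((a - b) * t + c)) t :=
    ((hasDerivAt_const_mul (a - b)).add_const c).exp.congr_deriv (mul_comm _ _)
  exact hasDerivAt_riccatiMobius_comp hexp (mt (Real.exp_eq_one_iff _).mp ht)

theorem sub_neg_mul_goldenConj_mul_sub_neg_mul_goldenRatio (A u : ℝ) :
    (u - -(A * ψ)) * (u - -(A * φ)) = u ^ 2 + A * u - A ^ 2 := by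
  linear_combination A * u * Real.goldenRatio_add_goldenConj +
    A ^ 2 * Real.goldenRatio_mul_goldenConj

theorem neg_mul_goldenConj_sub_neg_mul_goldenRatio (A : ℝ) :
    -(A * ψ) - -(A * φ) = A * √5 := by
  linear_combination A * Real.goldenRatio_sub_goldenConj

theorem riccatiMobius_neg_mul_goldenConj_neg_mul_goldenRatio (A y : ℝ) :
    riccatiMobius (-(A * ψ)) (-(A * φ)) y =
      -A * y / (y - 1) + A * (1 + √5) / 2 * (y + 1) / (y - 1) := by
  unfold riccatiMobius Real.goldenRatio Real.goldenConj
  ring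

theorem stmt_7_general (A E : ℝ) (w : ℝ → ℝ)
    (hw : ∀ t : ℝ, w t =
      -A * Real.exp (A * √5 * t + E) / (Real.exp (A * √5 * t + E) - 1)
        + (A * (1 + √5) / 2) * (Real.exp (A * √5 * t + E) + 1)
          / (Real.exp (A * √5 * t + E) - 1)) :
    ∀ t, A * √5 * t + E ≠ 0 → HasDerivAt w (-(A * w t) - (w t) ^ 2 + A ^ 2) t := by
  intro t ht
  simp only [← riccatiMobius_neg_mul_goldenConj_neg_mul_goldenRatio,
    ← neg_mul_goldenConj_sub_neg_mul_goldenRatio A] at hw ht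
  have hderiv : HasDerivAt w (-((w t - -(A * ψ)) * (w t - -(A * φ)))) t := by
    rw [hw t, funext hw]
    exact hasDerivAt_riccatiMobius_exp ht
  refine hderiv.congr_deriv ?_
  rw [sub_neg_mul_goldenConj_mul_sub_neg_mul_goldenRatio]
  ring

/-- The explicit function
`w(t) = −A·e^{A√5·t + E}/(e^{A√5·t + E} − 1) + (A(1+√5)/2)·(e^{A√5·t + E} + 1)/(e^{A√5·t + E} − 1)`
solves the autonomous Riccati equation `w' + A·w + w² − A² = 0` on `(−E/(A√5), ∞)`. -/
theorem stmt_7 (A E : ℝ) (hA : 0 < A) (w : ℝ → ℝ)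
    (hw : ∀ t : ℝ, w t =
      -A * Real.exp (A * Real.sqrt 5 * t + E) / (Real.exp (A * Real.sqrt 5 * t + E) - 1)
        + (A * (1 + Real.sqrt 5) / 2)
          * (Real.exp (A * Real.sqrt 5 * t + E) + 1)
          / (Real.exp (A * Real.sqrt 5 * t + E) - 1)) :
    ∀ t > -E / (A * Real.sqrt 5),
      HasDerivAt w (-(A * w t) - (w t) ^ 2 + A ^ 2) t := by
  intro t ht
  have hpos : 0 < A * √5 * t + E := by linarith [(div_lt_iff₀' (by positivity)).mp ht]
  exact stmt_7_general A E w hw t hpos.ne'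
end

section
/- Let A > 0 and D ∈ ℝ, and let w : (D/(A√5), ∞) → ℝ be given by w(t) = A/(1 − e^{−A√5·t + D}) + (A(√5−1)/2)·(1 + e^{−A√5·t + D})/(1 − e^{−A√5·t + D}). Then w is strictly decreasing on (D/(A√5), ∞), satisfies w(t) > A(1+√5)/2 for every t > D/(A√5), and w(t) → A(1+√5)/2 as t → +∞. -/
open Set Filter

/-!
The constant `A(1+√5)/2` is the larger root of `w² - A w - A²`, and `A√5` is the distance between
the two roots. Put `x = A√5 t - D`. The two fractions in `w` are affine in `n(x) = 1/(eˣ - 1)`, and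
`w = A(1+√5)/2 + A√5 n(x)`. Everything follows because `n` is positive and strictly decreasing
on `(0, ∞)` and vanishes at infinity.
-/

lemma inv_exp_sub_one_pos {x : ℝ} (hx : 0 < x) : 0 < (Real.exp x - 1)⁻¹ :=
  inv_pos.mpr (sub_pos.mpr (Real.one_lt_exp_iff.mpr hx))

lemma strictAntiOn_inv_exp_sub_one :
    StrictAntiOn (fun x : ℝ => (Real.exp x - 1)⁻¹) (Ioi 0) := by
  intro x hx y _ hxy
  exact inv_strictAnti₀ (inv_pos.mp (inv_exp_sub_one_pos hx))
    (sub_lt_sub_right (Real.exp_lt_exp.mpr hxy) 1)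

lemma tendsto_inv_exp_sub_one_atTop :
    Tendsto (fun x : ℝ => (Real.exp x - 1)⁻¹) atTop (nhds 0) :=
  tendsto_inv_atTop_zero.comp (tendsto_atTop_add_const_right atTop (-1) Real.tendsto_exp_atTop)

lemma inv_one_sub_exp_neg {x : ℝ} (hx : x ≠ 0) :
    (1 - Real.exp (-x))⁻¹ = 1 + (Real.exp x - 1)⁻¹ := by
  have h_sub : Real.exp x - 1 ≠ 0 := sub_ne_zero.mpr (mt (Real.exp_eq_one_iff x).mp hx)
  rw [Real.exp_neg]
  field_simp
  ring

lemma one_add_exp_neg_div_one_sub_exp_neg {x : ℝ} (hx : x ≠ 0) :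
    (1 + Real.exp (-x)) / (1 - Real.exp (-x)) = 1 + 2 * (Real.exp x - 1)⁻¹ := by
  have h_sub : 1 - Real.exp (-x) ≠ 0 :=
    sub_ne_zero.mpr fun h => hx (neg_eq_zero.mp ((Real.exp_eq_one_iff (-x)).mp h.symm))
  calc (1 + Real.exp (-x)) / (1 - Real.exp (-x))
      = 2 * (1 - Real.exp (-x))⁻¹ - 1 := by field_simp; ring
    _ = 1 + 2 * (Real.exp x - 1)⁻¹ := by rw [inv_one_sub_exp_neg hx]; ring

lemma div_add_mul_div_one_sub_exp_neg (A s : ℝ) {x : ℝ} (hx : x ≠ 0) :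
    A / (1 - Real.exp (-x)) + (A * (s - 1) / 2) * (1 + Real.exp (-x)) / (1 - Real.exp (-x)) =
      A * (1 + s) / 2 + A * s * (Real.exp x - 1)⁻¹ := by
  rw [mul_div_assoc, one_add_exp_neg_div_one_sub_exp_neg hx, div_eq_mul_inv,
    inv_one_sub_exp_neg hx]
  ring

/-- The barrier solution
`w(t) = A/(1 − e^{−A√5·t + D}) + (A(√5−1)/2)·(1 + e^{−A√5·t + D})/(1 − e^{−A√5·t + D})`
is strictly decreasing on `(D/(A√5), ∞)`, stays above `A(1+√5)/2` there, and tends to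
`A(1+√5)/2` as `t → +∞`. -/
theorem stmt_8 (A D : ℝ) (hA : 0 < A) (w : ℝ → ℝ)
    (hw : ∀ t : ℝ, w t =
      A / (1 - Real.exp (-(A * Real.sqrt 5 * t) + D))
        + (A * (Real.sqrt 5 - 1) / 2)
          * (1 + Real.exp (-(A * Real.sqrt 5 * t) + D))
          / (1 - Real.exp (-(A * Real.sqrt 5 * t) + D))) :
    StrictAntiOn w (Ioi (D / (A * Real.sqrt 5))) ∧
      (∀ t ∈ Ioi (D / (A * Real.sqrt 5)), A * (1 + Real.sqrt 5) / 2 < w t) ∧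
      Tendsto w atTop (nhds (A * (1 + Real.sqrt 5) / 2)) := by
  have hk : 0 < A * Real.sqrt 5 := by positivity
  have phase_pos : ∀ t ∈ Ioi (D / (A * Real.sqrt 5)), 0 < A * Real.sqrt 5 * t - D :=
    fun t ht => sub_pos.mpr ((div_lt_iff₀' hk).mp ht)
  have w_eq : ∀ t ∈ Ioi (D / (A * Real.sqrt 5)), w t = A * (1 + Real.sqrt 5) / 2 +
      A * Real.sqrt 5 * (Real.exp (A * Real.sqrt 5 * t - D) - 1)⁻¹ := by
    intro t ht
    have neg_phase : -(A * Real.sqrt 5 * t) + D = -(A * Real.sqrt 5 * t - D) := by ring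
    rw [hw, neg_phase, div_add_mul_div_one_sub_exp_neg A _ (phase_pos t ht).ne']
  refine ⟨fun s hs t ht hst => ?_, fun t ht => ?_, ?_⟩
  · rw [w_eq s hs, w_eq t ht]
    have phase_lt := sub_lt_sub_right (mul_lt_mul_of_pos_left hst hk) D
    gcongr ?_ + ?_ * ?_
    exact strictAntiOn_inv_exp_sub_one (phase_pos s hs) (phase_pos t ht) phase_lt
  · rw [w_eq t ht]
    exact lt_add_of_pos_right _ (mul_pos hk (inv_exp_sub_one_pos (phase_pos t ht)))
  · have phase_atTop : Tendsto (fun t => A * Real.sqrt 5 * t - D) atTop atTop :=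
      tendsto_atTop_add_const_right _ _ (tendsto_id.const_mul_atTop hk)
    have h_lim := ((tendsto_inv_exp_sub_one_atTop.comp phase_atTop).const_mul
      (A * Real.sqrt 5)).const_add (A * (1 + Real.sqrt 5) / 2)
    rw [mul_zero, add_zero] at h_lim
    exact h_lim.congr' ((eventually_gt_atTop _).mono fun t ht => (w_eq t ht).symm)
end

section
/- Let A > 0, t₀ ∈ ℝ, T ∈ (t₀, ∞], and let k, c : [t₀, T) → ℝ be continuous with |k(t)| ≤ A² and |c(t)| ≤ A for all t. Let r, w : [t₀, T) → ℝ be differentiable functions satisfying r'(t) + r(t)² + k(t) − c(t)·r(t) = 0 and w'(t) − A·w(t) + w(t)² − A² = 0 on [t₀, T), with w(t₀) = r(t₀) and r(t₀) > A(1+√5)/2. Then r(t) ≤ w(t) for all t ∈ [t₀, T). -/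
/-!
If `r` is a subsolution and `w` a supersolution of `y' = a y - y² + q`, then `u = r - w` satisfies
the *linear* inequality `u' ≤ (a - (r + w)) u`, so a Grönwall argument keeps `u` nonpositive once
it starts so. Comparing with the subsolution `0` shows that the barrier `w` is nonnegative when
`q ≥ 0`. At a point where `r` exceeds `w`, therefore, `r` is positive, and `c ≤ a`, `-q ≤ k` make
`r` a subsolution there, which is all that the comparison requires.
-/

open Set

theorem nonpos_of_deriv_right_le_mul_self {u u' : ℝ → ℝ} {a b K : ℝ}
    (hu : ContinuousOn u (Icc a b))
    (hu' : ∀ x ∈ Ico a b, HasDerivWithinAt u (u' x) (Ici x) x) (ha : u a ≤ 0)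
    (bound : ∀ x ∈ Ico a b, 0 < u x → u' x ≤ K * u x) :
    ∀ x ∈ Icc a b, u x ≤ 0 := by
  intro y hy
  refine le_of_forall_pos_le_add fun ε hε => ?_
  -- The fence grows at the rate `K + 1 > K` and is normalized to equal `ε` at `y`.
  let B : ℝ → ℝ := fun x => ε * Real.exp ((K + 1) * (x - y))
  have B_pos (x : ℝ) : 0 < B x := by positivity
  have hB (x : ℝ) : HasDerivAt B ((K + 1) * B x) x := by
    refine (((((hasDerivAt_id x).sub_const y).const_mul (K + 1)).exp).const_mul ε).congr_deriv ?_
    simp only [B, id_eq]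
    ring
  have hle : u y ≤ B y := by
    refine image_le_of_deriv_right_lt_deriv_boundary hu hu' (ha.trans (B_pos a).le) hB ?_ hy
    intro x hx hux
    calc u' x ≤ K * u x := bound x hx (hux ▸ B_pos x)
      _ < (K + 1) * B x := by rw [hux]; linarith [B_pos x]
  simpa [B] using hle

section OrdConnected

variable {s : Set ℝ} {t₀ : ℝ}

theorem hasDerivWithinAt_Ici_of_ordConnected {f : ℝ → ℝ} {f' x b : ℝ} (hs : s.OrdConnected)
    (h : HasDerivWithinAt f f' s x) (hx : x ∈ s) (hb : b ∈ s) (hxb : x < b) :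
    HasDerivWithinAt f f' (Ici x) x :=
  (h.mono (hs.out hx hb)).mono_of_mem_nhdsWithin (Icc_mem_nhdsGE hxb)

theorem nonpos_of_derivWithin_le_mul_self {u u' p : ℝ → ℝ} (hs : s.OrdConnected)
    (ht₀ : IsLeast s t₀) (hp : ContinuousOn p s)
    (hu : ∀ t ∈ s, HasDerivWithinAt u (u' t) s t) (hinit : u t₀ ≤ 0)
    (bound : ∀ t ∈ s, 0 < u t → u' t ≤ p t * u t) :
    ∀ t ∈ s, u t ≤ 0 := by
  intro b hb
  have hsub : Icc t₀ b ⊆ s := hs.out ht₀.1 hb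
  obtain ⟨K, hK⟩ := isCompact_Icc.bddAbove_image (hp.mono hsub)
  have hcont : ContinuousOn u (Icc t₀ b) := fun t ht =>
    (hu t (hsub ht)).continuousWithinAt.mono hsub
  refine nonpos_of_deriv_right_le_mul_self (u' := u') (K := K) hcont (fun t ht => ?_) hinit
    (fun t ht hut => ?_) b (right_mem_Icc.2 (ht₀.2 hb))
  · have hts : t ∈ s := hsub (Ico_subset_Icc_self ht)
    exact hasDerivWithinAt_Ici_of_ordConnected hs (hu t hts) hts hb ht.2
  · have ht' : t ∈ Icc t₀ b := Ico_subset_Icc_self ht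
    calc u' t ≤ p t * u t := bound t (hsub ht') hut
      _ ≤ K * u t := by gcongr; exact hK (mem_image_of_mem p ht')

theorem riccati_subsolution_le_supersolution {a q r r' w w' : ℝ → ℝ} (hs : s.OrdConnected)
    (ht₀ : IsLeast s t₀) (ha : ContinuousOn a s)
    (hr : ∀ t ∈ s, HasDerivWithinAt r (r' t) s t)
    (hw : ∀ t ∈ s, HasDerivWithinAt w (w' t) s t)
    (hsubsol : ∀ t ∈ s, w t < r t → r' t ≤ a t * r t - r t ^ 2 + q t)
    (hsupersol : ∀ t ∈ s, w t < r t → a t * w t - w t ^ 2 + q t ≤ w' t)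
    (hinit : r t₀ ≤ w t₀) :
    ∀ t ∈ s, r t ≤ w t := by
  have hrc : ContinuousOn r s := fun t ht => (hr t ht).continuousWithinAt
  have hwc : ContinuousOn w s := fun t ht => (hw t ht).continuousWithinAt
  have hdiff : ∀ t ∈ s, r t - w t ≤ 0 := by
    refine nonpos_of_derivWithin_le_mul_self (u := fun t => r t - w t)
      (p := fun t => a t - (r t + w t)) hs ht₀ (ha.sub (hrc.add hwc))
      (fun t ht => (hr t ht).sub (hw t ht)) (sub_nonpos.2 hinit) fun t ht hpos => ?_
    have hlt : w t < r t := sub_pos.1 hpos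
    calc r' t - w' t
        ≤ (a t * r t - r t ^ 2 + q t) - (a t * w t - w t ^ 2 + q t) :=
          sub_le_sub (hsubsol t ht hlt) (hsupersol t ht hlt)
      _ = (a t - (r t + w t)) * (r t - w t) := by ring
  exact fun t ht => sub_nonpos.1 (hdiff t ht)

theorem riccati_supersolution_nonneg {a q w w' : ℝ → ℝ} (hs : s.OrdConnected)
    (ht₀ : IsLeast s t₀) (ha : ContinuousOn a s) (hq : ∀ t ∈ s, 0 ≤ q t)
    (hw : ∀ t ∈ s, HasDerivWithinAt w (w' t) s t)
    (hsupersol : ∀ t ∈ s, w t < 0 → a t * w t - w t ^ 2 + q t ≤ w' t) (hinit : 0 ≤ w t₀) :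
    ∀ t ∈ s, 0 ≤ w t :=
  riccati_subsolution_le_supersolution hs ht₀ ha (fun t _ => hasDerivWithinAt_const t s 0) hw
    (fun t ht _ => by simpa using hq t ht) hsupersol hinit

theorem stmt_10_general {a c k q r w : ℝ → ℝ} (hs : s.OrdConnected) (ht₀ : IsLeast s t₀)
    (ha : ContinuousOn a s) (hq : ∀ t ∈ s, 0 ≤ q t)
    (hca : ∀ t ∈ s, c t ≤ a t) (hkq : ∀ t ∈ s, -q t ≤ k t)
    (hr : ∀ t ∈ s, HasDerivWithinAt r (c t * r t - r t ^ 2 - k t) s t)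
    (hw : ∀ t ∈ s, HasDerivWithinAt w (a t * w t - w t ^ 2 + q t) s t)
    (hinit : r t₀ ≤ w t₀) (hw₀ : 0 ≤ w t₀) :
    ∀ t ∈ s, r t ≤ w t := by
  have hw_nonneg : ∀ t ∈ s, 0 ≤ w t :=
    riccati_supersolution_nonneg hs ht₀ ha hq hw (fun _ _ _ => le_rfl) hw₀
  refine riccati_subsolution_le_supersolution hs ht₀ ha hr hw (fun t ht hlt => ?_)
    (fun _ _ _ => le_rfl) hinit
  have hr_nonneg : 0 ≤ r t := (hw_nonneg t ht).trans hlt.le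
  have hcr : c t * r t ≤ a t * r t := mul_le_mul_of_nonneg_right (hca t ht) hr_nonneg
  linarith [hkq t ht]

end OrdConnected

/-- Comparison of a solution of the perturbed Riccati equation
`r' + r² + k − c·r = 0` (with `|k| ≤ A²`, `|c| ≤ A`) with the barrier solution of
`w' − A·w + w² − A² = 0` on `[t₀, T)`, `T ∈ (t₀, ∞]`: if `w(t₀) = r(t₀)` and
`r(t₀) > A(1+√5)/2`, then `r ≤ w` throughout. -/
theorem stmt_10 (A t₀ : ℝ) (hA : 0 < A) (T : EReal) (hT : (t₀ : EReal) < T)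
    (k c r w : ℝ → ℝ)
    (hk : ContinuousOn k {t : ℝ | t₀ ≤ t ∧ (t : EReal) < T})
    (hc : ContinuousOn c {t : ℝ | t₀ ≤ t ∧ (t : EReal) < T})
    (hkb : ∀ t, t₀ ≤ t → (t : EReal) < T → |k t| ≤ A ^ 2)
    (hcb : ∀ t, t₀ ≤ t → (t : EReal) < T → |c t| ≤ A)
    (hr : ∀ t, t₀ ≤ t → (t : EReal) < T →
      HasDerivWithinAt r (c t * r t - r t ^ 2 - k t) {t : ℝ | t₀ ≤ t ∧ (t : EReal) < T} t)
    (hw : ∀ t, t₀ ≤ t → (t : EReal) < T →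
      HasDerivWithinAt w (A * w t - w t ^ 2 + A ^ 2) {t : ℝ | t₀ ≤ t ∧ (t : EReal) < T} t)
    (hinit : w t₀ = r t₀)
    (hbig : A * (1 + Real.sqrt 5) / 2 < r t₀) :
    ∀ t, t₀ ≤ t → (t : EReal) < T → r t ≤ w t := by
  have hs : {t : ℝ | t₀ ≤ t ∧ (t : EReal) < T}.OrdConnected :=
    ordConnected_Ici.inter (ordConnected_Iio.preimage_mono EReal.coe_strictMono.monotone)
  have hw₀ : 0 ≤ w t₀ := hinit ▸ (lt_trans (by positivity) hbig).le
  exact fun t h₁ h₂ => stmt_10_general hs ⟨⟨le_rfl, hT⟩, fun _ h => h.1⟩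
    (continuousOn_const (c := A)) (q := fun _ => A ^ 2) (fun _ _ => sq_nonneg A)
    (fun t h => (abs_le.1 (hcb t h.1 h.2)).2) (fun t h => (abs_le.1 (hkb t h.1 h.2)).1)
    (fun t h => hr t h.1 h.2) (fun t h => hw t h.1 h.2) hinit.ge hw₀ t ⟨h₁, h₂⟩
end

section
/- Let A > 0, t₀ ∈ ℝ, and let k, c : [t₀, ∞) → ℝ be continuous with |k(t)| ≤ A² and |c(t)| ≤ A for all t ≥ t₀. If r : [t₀, ∞) → ℝ is differentiable and satisfies the Riccati equation r'(t) + r(t)² + k(t) − c(t)·r(t) = 0 for all t ≥ t₀, then r(t) ≥ −A(1+√5)/2 for all t ≥ t₀. -/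
open Set

/-!
Suppose `-C ≤ c` and `-K ≤ k`, and let `m` be the larger root of `x² = C * x + K`. Where `r < -m`,
the excess `v = -r - m` satisfies `v' ≥ v²`. So once `v` is positive it stays positive, and `1 / v`
decreases at least at unit speed: it would vanish in finite time, whereas `r` exists forever.
-/

section BlowUp

variable {a b κ : ℝ} {v v' : ℝ → ℝ}

lemma inv_le_inv_sub_of_mul_sq_le_deriv_right (hab : a ≤ b) (hv : ContinuousOn v (Icc a b))
    (hv' : ∀ t ∈ Ico a b, HasDerivWithinAt v (v' t) (Ici t) t)
    (hpos : ∀ t ∈ Icc a b, 0 < v t) (hle : ∀ t ∈ Ico a b, κ * v t ^ 2 ≤ v' t) :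
    (v b)⁻¹ ≤ (v a)⁻¹ - κ * (b - a) := by
  have hline (t : ℝ) : HasDerivAt (fun s ↦ (v a)⁻¹ - κ * (s - a)) (-κ) t := by
    simpa using (((hasDerivAt_id t).sub_const a).const_mul κ).const_sub (v a)⁻¹
  refine image_le_of_deriv_right_le_deriv_boundary (f := fun t ↦ (v t)⁻¹)
    (f' := fun t ↦ -v' t / v t ^ 2)
    (hv.inv₀ fun t ht ↦ (hpos t ht).ne')
    (fun t ht ↦ (hv' t ht).fun_inv (hpos t (Ico_subset_Icc_self ht)).ne')
    (by simp) (fun t _ ↦ (hline t).continuousAt.continuousWithinAt)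
    (fun t _ ↦ (hline t).hasDerivWithinAt) (fun t ht ↦ ?_) (right_mem_Icc.2 hab)
  have hvt : 0 < v t := hpos t (Ico_subset_Icc_self ht)
  rw [div_le_iff₀ (by positivity)]
  linarith [hle t ht]

lemma mul_sub_lt_inv_of_mul_sq_le_deriv_right (hκ : 0 < κ) (hab : a ≤ b)
    (hv : ContinuousOn v (Icc a b))
    (hv' : ∀ t ∈ Ico a b, HasDerivWithinAt v (v' t) (Ici t) t)
    (hle : ∀ t ∈ Ico a b, 0 < v t → κ * v t ^ 2 ≤ v' t) (ha : 0 < v a) :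
    κ * (b - a) < (v a)⁻¹ := by
  have hmin : ∀ t ∈ Icc a b, v a ≤ v t := fun t ht ↦
    image_le_of_deriv_right_lt_deriv_boundary' (f := fun _ ↦ v a) (f' := fun _ ↦ 0)
      continuousOn_const (fun s _ ↦ hasDerivWithinAt_const s _ _) le_rfl hv hv'
      (fun s hs heq ↦ by
        have hvs : 0 < v s := ha.trans_eq heq
        exact (by positivity : 0 < κ * v s ^ 2).trans_le (hle s hs hvs)) ht
  have hpos : ∀ t ∈ Icc a b, 0 < v t := fun t ht ↦ ha.trans_le (hmin t ht)
  have hinv : (v b)⁻¹ ≤ (v a)⁻¹ - κ * (b - a) :=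
    inv_le_inv_sub_of_mul_sq_le_deriv_right hab hv hv' hpos
      fun t ht ↦ hle t ht (hpos t (Ico_subset_Icc_self ht))
  have hvb : 0 < (v b)⁻¹ := inv_pos.2 (hpos b (right_mem_Icc.2 hab))
  linarith

lemma nonpos_of_mul_sq_le_deriv_right (hκ : 0 < κ) (hv : ContinuousOn v (Ici a))
    (hv' : ∀ t ∈ Ici a, HasDerivWithinAt v (v' t) (Ici t) t)
    (hle : ∀ t ∈ Ici a, 0 < v t → κ * v t ^ 2 ≤ v' t) :
    ∀ t ∈ Ici a, v t ≤ 0 := by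
  intro t ht
  by_contra! hvt
  have hsub : Ici t ⊆ Ici a := Ici_subset_Ici.2 ht
  have hlt : κ * (t + (κ * v t)⁻¹ - t) < (v t)⁻¹ :=
    mul_sub_lt_inv_of_mul_sq_le_deriv_right hκ (le_add_of_nonneg_right (by positivity))
      (hv.mono (Icc_subset_Ici_self.trans hsub)) (fun s hs ↦ hv' s (hsub hs.1))
      (fun s hs ↦ hle s (hsub hs.1)) hvt
  have heq : κ * (t + (κ * v t)⁻¹ - t) = (v t)⁻¹ := by
    field_simp
    ring
  exact hlt.ne heq

end BlowUp

lemma sq_sub_le_of_sq_eq {C K m u : ℝ} (hm : m ^ 2 = C * m + K) (hC : C ≤ 2 * m) (hu : m ≤ u) :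
    (u - m) ^ 2 ≤ u ^ 2 - C * u - K := by
  have hprod : 0 ≤ (2 * m - C) * (u - m) := mul_nonneg (sub_nonneg.2 hC) (sub_nonneg.2 hu)
  linear_combination hprod - hm

theorem stmt_11_general {t₀ C K : ℝ} {k c r r' : ℝ → ℝ} (hK : 0 ≤ K)
    (hk : ∀ t ∈ Ici t₀, -K ≤ k t) (hc : ∀ t ∈ Ici t₀, -C ≤ c t)
    (hr : ContinuousOn r (Ici t₀))
    (hr' : ∀ t ∈ Ici t₀, HasDerivWithinAt r (r' t) (Ici t) t)
    (hle : ∀ t ∈ Ici t₀, r' t ≤ c t * r t - r t ^ 2 - k t) :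
    ∀ t ∈ Ici t₀, -((C + √(C ^ 2 + 4 * K)) / 2) ≤ r t := by
  set m := (C + √(C ^ 2 + 4 * K)) / 2 with hm
  have hdisc : √(C ^ 2 + 4 * K) ^ 2 = C ^ 2 + 4 * K := Real.sq_sqrt (by positivity)
  have hroot : m ^ 2 = C * m + K := by rw [hm]; linear_combination hdisc / 4
  have hC : C ≤ 2 * m := by linarith [Real.sqrt_nonneg (C ^ 2 + 4 * K)]
  have hm_nonneg : 0 ≤ m := by
    linarith [neg_le_of_abs_le (Real.abs_le_sqrt (by linarith : C ^ 2 ≤ C ^ 2 + 4 * K))]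
  have hexcess : ∀ t ∈ Ici t₀, -r t - m ≤ 0 := by
    refine nonpos_of_mul_sq_le_deriv_right one_pos (hr.neg.sub continuousOn_const)
      (fun t ht ↦ (hr' t ht).neg.sub_const m) fun t ht hpos ↦ ?_
    have hdamp : c t * r t ≤ -C * r t := mul_le_mul_of_nonpos_right (hc t ht) (by linarith)
    calc 1 * (-r t - m) ^ 2 = (-r t - m) ^ 2 := one_mul _
      _ ≤ (-r t) ^ 2 - C * -r t - K := sq_sub_le_of_sq_eq hroot hC (by linarith)
      _ ≤ -(c t * r t - r t ^ 2 - k t) := by linarith [hk t ht]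
      _ ≤ -r' t := neg_le_neg (hle t ht)
  exact fun t ht ↦ by linarith [hexcess t ht]

/-- A solution of the Riccati equation `r' + r² + k − c·r = 0` defined on all of
`[t₀, ∞)`, with `|k| ≤ A²` and `|c| ≤ A`, satisfies `r ≥ −A(1+√5)/2`. -/
theorem stmt_11 (A t₀ : ℝ) (hA : 0 < A) (k c r : ℝ → ℝ)
    (hk : ContinuousOn k (Ici t₀)) (hc : ContinuousOn c (Ici t₀))
    (hkb : ∀ t ∈ Ici t₀, |k t| ≤ A ^ 2) (hcb : ∀ t ∈ Ici t₀, |c t| ≤ A)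
    (hr : ∀ t ∈ Ici t₀, HasDerivWithinAt r (c t * r t - r t ^ 2 - k t) (Ici t₀) t) :
    ∀ t ∈ Ici t₀, -(A * (1 + Real.sqrt 5) / 2) ≤ r t := by
  have hsqrt : √(A ^ 2 + 4 * A ^ 2) = A * √5 := by
    rw [show A ^ 2 + 4 * A ^ 2 = A ^ 2 * 5 by ring, Real.sqrt_mul (sq_nonneg A),
      Real.sqrt_sq hA.le]
  simpa only [hsqrt, mul_add, mul_one] using stmt_11_general (sq_nonneg A)
    (fun t ht ↦ neg_le_of_abs_le (hkb t ht)) (fun t ht ↦ neg_le_of_abs_le (hcb t ht))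
    (fun t ht ↦ (hr t ht).continuousWithinAt)
    (fun t ht ↦ (hr t ht).mono (Ici_subset_Ici.2 ht)) fun _ _ ↦ le_rfl
end

section
/- Let A > 0, t₁ ∈ ℝ, and let k, c : (−∞, t₁] → ℝ be continuous with |k(t)| ≤ A² and |c(t)| ≤ A for all t ≤ t₁. If r : (−∞, t₁] → ℝ is differentiable and satisfies the Riccati equation r'(t) + r(t)² + k(t) − c(t)·r(t) = 0 for all t ≤ t₁, then r(t) ≤ A(1+√5)/2 for all t ≤ t₁. -/
open Set

/-!
Let `p` be the larger root of `X² = C X + K`, where `c ≤ C` and `-K ≤ k`. Above the level `p` a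
solution of the Riccati equation satisfies `r' ≤ -(r - p)²`. Started at time `a`, from however large
a value, such a function has decayed to `r t - p ≤ 1 / (t - a)` by time `t`. A solution that has
existed forever allows `a → -∞`, so that `r t ≤ p`.
-/

section Decay

variable {f f' : ℝ → ℝ} {p : ℝ}

theorem sub_mul_sub_le_one_of_deriv_right_le_neg_sq {a b : ℝ} (hf : ContinuousOn f (Icc a b))
    (hf' : ∀ x ∈ Ico a b, HasDerivWithinAt f (f' x) (Ici x) x)
    (bound : ∀ x ∈ Ico a b, p < f x → f' x ≤ -(f x - p) ^ 2) {x : ℝ} (hx : x ∈ Icc a b) :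
    (x - a) * (f x - p) ≤ 1 := by
  refine le_of_forall_gt_imp_ge_of_dense fun M hM ↦ ?_
  -- Where `(y - a) * (f y - p) = M > 1`, its derivative is at most `(f y - p) * (1 - M) < 0`.
  refine image_le_of_deriv_right_lt_deriv_boundary (f := fun y ↦ (y - a) * (f y - p))
    (f' := fun y ↦ 1 * (f y - p) + (y - a) * f' y) (B := fun _ ↦ M) (B' := fun _ ↦ 0)
    (by fun_prop)
    (fun y hy ↦ ((hasDerivWithinAt_id y _).sub_const a).mul ((hf' y hy).sub_const p))
    (by linarith) (fun y ↦ hasDerivAt_const y M) (fun y hy hyM ↦ ?_) hx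
  have hya : 0 ≤ y - a := sub_nonneg.2 hy.1
  have hyp : 0 < f y - p := pos_of_mul_pos_right (by linarith) hya
  calc 1 * (f y - p) + (y - a) * f' y
      ≤ 1 * (f y - p) + (y - a) * -(f y - p) ^ 2 := by
        gcongr
        exact bound y hy (sub_pos.1 hyp)
    _ = (f y - p) * (1 - M) := by rw [← hyM]; ring
    _ < 0 := mul_neg_of_pos_of_neg hyp (sub_neg.2 hM)

theorem le_of_hasDerivWithinAt_Iic_le_neg_sq {b : ℝ}
    (hf : ∀ t ∈ Iic b, HasDerivWithinAt f (f' t) (Iic b) t)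
    (bound : ∀ t ∈ Iic b, p < f t → f' t ≤ -(f t - p) ^ 2) {t : ℝ} (ht : t ∈ Iic b) :
    f t ≤ p := by
  have decay (a : ℝ) (hat : a ≤ t) : (t - a) * (f t - p) ≤ 1 := by
    have hsub : Icc a t ⊆ Iic b := fun x hx ↦ hx.2.trans ht
    refine sub_mul_sub_le_one_of_deriv_right_le_neg_sq (f' := f')
      (fun x hx ↦ ((hf x (hsub hx)).mono hsub).continuousWithinAt) (fun x hx ↦ ?_)
      (fun x hx ↦ bound x (hsub (Ico_subset_Icc_self hx))) (right_mem_Icc.2 hat)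
    have hxb : x < b := hx.2.trans_le ht
    exact ((hf x hxb.le).hasDerivAt (Iic_mem_nhds hxb)).hasDerivWithinAt
  by_contra! hlt
  have hpos : 0 < f t - p := sub_pos.2 hlt
  have htwo := decay (t - 2 / (f t - p)) (sub_le_self t (by positivity))
  rw [sub_sub_cancel, div_mul_cancel₀ _ hpos.ne'] at htwo
  norm_num at htwo

end Decay

theorem mul_sub_sq_sub_le_neg_sub_sq {C K p c k x : ℝ} (hp : p ^ 2 = C * p + K) (hp₀ : 0 ≤ p)
    (hCp : C ≤ 2 * p) (hc : c ≤ C) (hk : -K ≤ k) (hx : p ≤ x) :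
    c * x - x ^ 2 - k ≤ -(x - p) ^ 2 := by
  have hcx : c * x ≤ C * x := mul_le_mul_of_nonneg_right hc (hp₀.trans hx)
  have hroots : 0 ≤ (2 * p - C) * (x - p) := mul_nonneg (sub_nonneg.2 hCp) (sub_nonneg.2 hx)
  linarith

theorem stmt_12_general {C K t₁ : ℝ} (hK : 0 ≤ K) {k c r : ℝ → ℝ}
    (hk : ∀ t ∈ Iic t₁, -K ≤ k t) (hc : ∀ t ∈ Iic t₁, c t ≤ C)
    (hr : ∀ t ∈ Iic t₁, HasDerivWithinAt r (c t * r t - r t ^ 2 - k t) (Iic t₁) t) :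
    ∀ t ∈ Iic t₁, r t ≤ (C + √(C ^ 2 + 4 * K)) / 2 := by
  intro t ht
  set p := (C + √(C ^ 2 + 4 * K)) / 2 with hp
  have hsq : √(C ^ 2 + 4 * K) ^ 2 = C ^ 2 + 4 * K := Real.sq_sqrt (by positivity)
  have hroot : p ^ 2 = C * p + K := by rw [hp]; linear_combination hsq / 4
  have hp₀ : 0 ≤ p := by
    have : -C ≤ √(C ^ 2 + 4 * K) := Real.le_sqrt_of_sq_le (by linarith [neg_sq C])
    linarith
  have hCp : C ≤ 2 * p := by linarith [Real.sqrt_nonneg (C ^ 2 + 4 * K)]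
  exact le_of_hasDerivWithinAt_Iic_le_neg_sq hr (fun s hs hps ↦
    mul_sub_sq_sub_le_neg_sub_sq hroot hp₀ hCp (hc s hs) (hk s hs) hps.le) ht

/-- A solution of the Riccati equation `r' + r² + k − c·r = 0` defined on all of
`(−∞, t₁]`, with `|k| ≤ A²` and `|c| ≤ A`, satisfies `r ≤ A(1+√5)/2`. -/
theorem stmt_12 (A t₁ : ℝ) (hA : 0 < A) (k c r : ℝ → ℝ)
    (hk : ContinuousOn k (Iic t₁)) (hc : ContinuousOn c (Iic t₁))
    (hkb : ∀ t ∈ Iic t₁, |k t| ≤ A ^ 2) (hcb : ∀ t ∈ Iic t₁, |c t| ≤ A)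
    (hr : ∀ t ∈ Iic t₁, HasDerivWithinAt r (c t * r t - r t ^ 2 - k t) (Iic t₁) t) :
    ∀ t ∈ Iic t₁, r t ≤ A * (1 + Real.sqrt 5) / 2 := by
  have hsqrt : √(A ^ 2 + 4 * A ^ 2) = A * √5 := by
    rw [show A ^ 2 + 4 * A ^ 2 = A ^ 2 * 5 by ring, Real.sqrt_mul (sq_nonneg A),
      Real.sqrt_sq hA.le]
  simpa only [hsqrt, mul_add, mul_one] using stmt_12_general (sq_nonneg A)
    (fun t ht ↦ neg_le_of_abs_le (hkb t ht)) (fun t ht ↦ le_of_abs_le (hcb t ht)) hr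
end

section
/- Let A > 0 and let k, c : ℝ → ℝ be continuous with |k(t)| ≤ A² and |c(t)| ≤ A for all t ∈ ℝ. If r : ℝ → ℝ is differentiable and satisfies the Riccati equation r'(t) + r(t)² + k(t) − c(t)·r(t) = 0 for all t ∈ ℝ, then |r(t)| ≤ A(1+√5)/2 for all t ∈ ℝ. -/
/-!
Let `B` be the larger root of `x² = C x + K`, where `|c| ≤ C` and `-K ≤ k`. As long as `r < -B`,
the function `u = -B - r` is positive and satisfies `u' ≥ u²`, so `1 / u` decreases at least at
unit speed and would reach `0` in finite time. Hence a solution on a forward half-line cannot start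
below `-B`. The Riccati equation is preserved by `r(t) ↦ -r(-t)`, which turns this into the upper
bound for solutions on backward half-lines.
-/

open Set

section FiniteTimeBlowUp

variable {u u' : ℝ → ℝ} {κ a b : ℝ}

theorem left_le_of_mul_sq_le_deriv_right (hκ : 0 < κ) (hu : ContinuousOn u (Icc a b))
    (hu' : ∀ t ∈ Ico a b, HasDerivWithinAt u (u' t) (Ici t) t)
    (hbound : ∀ t ∈ Ico a b, 0 < u t → κ * u t ^ 2 ≤ u' t) (ha : 0 < u a) :
    ∀ t ∈ Icc a b, u a ≤ u t := by
  refine image_le_of_deriv_right_lt_deriv_boundary' continuousOn_const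
    (fun t _ ↦ hasDerivWithinAt_const t _ (u a)) le_rfl hu hu' fun t ht hut ↦ ?_
  have hpos : 0 < u t := hut ▸ ha
  exact (by positivity : 0 < κ * u t ^ 2).trans_le (hbound t ht hpos)

theorem inv_le_inv_sub_of_mul_sq_le_deriv_right_s13 (hκ : 0 < κ) (hu : ContinuousOn u (Icc a b))
    (hu' : ∀ t ∈ Ico a b, HasDerivWithinAt u (u' t) (Ici t) t)
    (hbound : ∀ t ∈ Ico a b, 0 < u t → κ * u t ^ 2 ≤ u' t) (ha : 0 < u a) :
    ∀ t ∈ Icc a b, (u t)⁻¹ ≤ (u a)⁻¹ - κ * (t - a) := by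
  have hpos : ∀ t ∈ Icc a b, 0 < u t := fun t ht ↦
    ha.trans_le (left_le_of_mul_sq_le_deriv_right hκ hu hu' hbound ha t ht)
  have hinv : ∀ t ∈ Ico a b, HasDerivWithinAt (fun s ↦ (u s)⁻¹) (-u' t / u t ^ 2) (Ici t) t :=
    fun t ht ↦ (hu' t ht).fun_inv (hpos t (Ico_subset_Icc_self ht)).ne'
  have hline (t : ℝ) : HasDerivAt (fun s ↦ (u a)⁻¹ - κ * (s - a)) (-κ) t := by
    simpa using (((hasDerivAt_id t).sub_const a).const_mul κ).const_sub (u a)⁻¹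
  refine image_le_of_deriv_right_le_deriv_boundary (hu.inv₀ fun t ht ↦ (hpos t ht).ne') hinv
    (by simp) (fun t _ ↦ (hline t).continuousAt.continuousWithinAt)
    (fun t _ ↦ (hline t).hasDerivWithinAt) fun t ht ↦ ?_
  have ht_pos : 0 < u t := hpos t (Ico_subset_Icc_self ht)
  rw [div_le_iff₀ (by positivity), neg_mul]
  exact neg_le_neg (hbound t ht ht_pos)

theorem nonpos_of_mul_sq_le_deriv_right_s13 (hκ : 0 < κ) (hu : ContinuousOn u (Ici a))
    (hu' : ∀ t ∈ Ici a, HasDerivWithinAt u (u' t) (Ici t) t)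
    (hbound : ∀ t ∈ Ici a, 0 < u t → κ * u t ^ 2 ≤ u' t) : u a ≤ 0 := by
  by_contra! ha
  -- The time at which the comparison solution `1 / (1 / u a - κ * (t - a))` blows up.
  set T := a + (u a)⁻¹ / κ with hT
  have haT : a ≤ T := le_add_of_nonneg_right (by positivity)
  have huT : ContinuousOn u (Icc a T) := hu.mono Icc_subset_Ici_self
  have huT' : ∀ t ∈ Ico a T, HasDerivWithinAt u (u' t) (Ici t) t := fun t ht ↦ hu' t ht.1
  have hboundT : ∀ t ∈ Ico a T, 0 < u t → κ * u t ^ 2 ≤ u' t := fun t ht ↦ hbound t ht.1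
  have hle : u a ≤ u T :=
    left_le_of_mul_sq_le_deriv_right hκ huT huT' hboundT ha T (right_mem_Icc.2 haT)
  have hinv_le : (u T)⁻¹ ≤ (u a)⁻¹ - κ * (T - a) :=
    inv_le_inv_sub_of_mul_sq_le_deriv_right_s13 hκ huT huT' hboundT ha T (right_mem_Icc.2 haT)
  have hzero : (u a)⁻¹ - κ * (T - a) = 0 := by
    rw [hT, add_sub_cancel_left, mul_div_cancel₀ _ hκ.ne', sub_self]
  exact (inv_pos.2 (ha.trans_le hle)).not_ge (hinv_le.trans_eq hzero)

end FiniteTimeBlowUp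

/-- `r` solves the Riccati equation `r' + r² + k - c r = 0` on `s`. The derivative is taken within
`s`, so that it is one-sided at an endpoint of an interval. -/
def IsRiccatiSolutionOn (k c r : ℝ → ℝ) (s : Set ℝ) : Prop :=
  ∀ t ∈ s, HasDerivWithinAt r (c t * r t - r t ^ 2 - k t) s t

namespace IsRiccatiSolutionOn

variable {k c r : ℝ → ℝ} {s s' : Set ℝ} {a B C K : ℝ}

theorem continuousOn (hr : IsRiccatiSolutionOn k c r s) : ContinuousOn r s :=
  fun t ht ↦ (hr t ht).continuousWithinAt

theorem mono (hr : IsRiccatiSolutionOn k c r s) (hs : s' ⊆ s) : IsRiccatiSolutionOn k c r s' :=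
  fun t ht ↦ (hr t (hs ht)).mono hs

theorem neg_comp_neg (hr : IsRiccatiSolutionOn k c r s) :
    IsRiccatiSolutionOn (fun t ↦ k (-t)) (fun t ↦ -c (-t)) (fun t ↦ -r (-t)) (-s) := by
  intro t ht
  refine ((hr (-t) ht).scomp t (hasDerivWithinAt_neg t (-s)) fun _ hx ↦ hx).neg.congr_deriv ?_
  simp only [smul_eq_mul]
  ring

theorem neg_le_of_Ici (hr : IsRiccatiSolutionOn k c r (Ici a)) (hk : ∀ t ∈ Ici a, -K ≤ k t)
    (hc : ∀ t ∈ Ici a, -C ≤ c t) (hB : 0 ≤ B) (hCB : C ≤ 2 * B) (hroot : C * B + K ≤ B ^ 2) :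
    -B ≤ r a := by
  refine sub_nonpos.1 (nonpos_of_mul_sq_le_deriv_right_s13 (u := fun t ↦ -B - r t) one_pos
    (continuousOn_const.sub hr.continuousOn)
    (fun t ht ↦ ((hr t ht).mono (Ici_subset_Ici.2 ht)).const_sub (-B)) fun t ht hu ↦ ?_)
  have hc_mul : -C * -r t ≤ c t * -r t := by
    gcongr
    exacts [by linarith, hc t ht]
  calc 1 * (-B - r t) ^ 2
      ≤ (-B - r t) ^ 2 + ((2 * B - C) * (-B - r t) + (B ^ 2 - (C * B + K))) := by
        rw [one_mul]
        exact le_add_of_nonneg_right <|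
          add_nonneg (mul_nonneg (sub_nonneg.2 hCB) hu.le) (sub_nonneg.2 hroot)
    _ = -C * -r t + r t ^ 2 - K := by ring
    _ ≤ -(c t * r t - r t ^ 2 - k t) := by linarith [hk t ht]

theorem le_of_Iic (hr : IsRiccatiSolutionOn k c r (Iic a)) (hk : ∀ t ∈ Iic a, -K ≤ k t)
    (hc : ∀ t ∈ Iic a, c t ≤ C) (hB : 0 ≤ B) (hCB : C ≤ 2 * B) (hroot : C * B + K ≤ B ^ 2) :
    r a ≤ B := by
  have hr_reflected := hr.neg_comp_neg
  rw [neg_Iic] at hr_reflected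
  have hmem : ∀ t ∈ Ici (-a), -t ∈ Iic a := fun _ ht ↦ mem_Iic.2 (neg_le.1 (mem_Ici.1 ht))
  have h := hr_reflected.neg_le_of_Ici (fun t ht ↦ hk (-t) (hmem t ht))
    (fun t ht ↦ neg_le_neg (hc (-t) (hmem t ht))) hB hCB hroot
  simpa only [neg_neg, neg_le_neg_iff] using h

theorem abs_le_of_univ (hr : IsRiccatiSolutionOn k c r univ) (hk : ∀ t, -K ≤ k t)
    (hc : ∀ t, |c t| ≤ C) (hCB : C ≤ 2 * B) (hroot : C * B + K ≤ B ^ 2) (t : ℝ) :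
    |r t| ≤ B := by
  have hB : 0 ≤ B := by linarith [(abs_nonneg (c t)).trans (hc t)]
  have hlower : -B ≤ r t := (hr.mono (subset_univ (Ici t))).neg_le_of_Ici (fun x _ ↦ hk x)
    (fun x _ ↦ neg_le_of_abs_le (hc x)) hB hCB hroot
  have hupper : r t ≤ B := (hr.mono (subset_univ (Iic t))).le_of_Iic (fun x _ ↦ hk x)
    (fun x _ ↦ le_of_abs_le (hc x)) hB hCB hroot
  exact abs_le.2 ⟨hlower, hupper⟩

end IsRiccatiSolutionOn

theorem stmt_13_general {k c r : ℝ → ℝ} {C K : ℝ} (hdisc : 0 ≤ C ^ 2 + 4 * K)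
    (hk : ∀ t, -K ≤ k t) (hc : ∀ t, |c t| ≤ C)
    (hr : ∀ t, HasDerivAt r (c t * r t - r t ^ 2 - k t) t) (t : ℝ) :
    |r t| ≤ (C + √(C ^ 2 + 4 * K)) / 2 := by
  have hsqrt : 0 ≤ √(C ^ 2 + 4 * K) := Real.sqrt_nonneg _
  have hsol : IsRiccatiSolutionOn k c r univ := fun x _ ↦ (hr x).hasDerivWithinAt
  refine hsol.abs_le_of_univ hk hc (by linarith) (le_of_eq ?_) t
  linear_combination -Real.sq_sqrt hdisc / 4

/-- A solution of the Riccati equation `r' + r² + k − c·r = 0` defined on all of `ℝ`,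
with `|k| ≤ A²` and `|c| ≤ A`, satisfies `|r| ≤ A(1+√5)/2`. -/
theorem stmt_13 (A : ℝ) (hA : 0 < A) (k c r : ℝ → ℝ)
    (hk : Continuous k) (hc : Continuous c)
    (hkb : ∀ t : ℝ, |k t| ≤ A ^ 2) (hcb : ∀ t : ℝ, |c t| ≤ A)
    (hr : ∀ t : ℝ, HasDerivAt r (c t * r t - r t ^ 2 - k t) t) :
    ∀ t : ℝ, |r t| ≤ A * (1 + Real.sqrt 5) / 2 := by
  have hsqrt : √(A ^ 2 + 4 * A ^ 2) = A * √5 := by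
    rw [show A ^ 2 + 4 * A ^ 2 = A ^ 2 * 5 by ring, Real.sqrt_mul (sq_nonneg A),
      Real.sqrt_sq hA.le]
  simpa only [hsqrt, mul_one_add] using
    stmt_13_general (by positivity) (fun t ↦ neg_le_of_abs_le (hkb t)) hcb hr
end
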